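/- arXiv:2102.05344 — 4 statements merged into one kernel-verified Lean document; each statement's English description precedes it below -/
import Mathlib

section
/- Let k be a field and let Z be an integral scheme of finite type over k whose underlying topological space has positive Krull dimension. Then the diagonal morphism Δ : Z → Z ×_{Spec k} Z is not surjective; equivalently, there is a point of Z ×_{Spec k} Z not lying in the image of the diagonal. -/
open AlgebraicGeometry CategoryTheory CategoryTheory.Limits

/-!
A surjective diagonal means that `f : Z ⟶ Spec k` is universally injective, hence injective
(`UniversallyInjective.iff_diagonal`). Since `Spec k` is a single point, `Z` then has at most one
point, so it is a discrete space and its Krull dimension is at most `0`.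
-/

/-- Let `Z` be an integral scheme of finite type over a field `k` whose underlying
topological space has positive Krull dimension.  Then the diagonal morphism
`Δ : Z ⟶ Z ×_{Spec k} Z` is not surjective on underlying topological spaces. -/
theorem diagonal_not_surjective_of_positive_dimension
    (k : Type) [Field k] (Z : Scheme) [IsIntegral Z]
    (f : Z ⟶ Spec (CommRingCat.of k))
    [LocallyOfFiniteType f] [QuasiCompact f]
    (hdim : 0 < topologicalKrullDim Z) :
    ¬ Function.Surjective (pullback.diagonal f).base := by
  intro h
  have hf : UniversallyInjective f := (UniversallyInjective.iff_diagonal f).mpr ⟨h⟩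
  have hpt : Subsingleton (Spec (CommRingCat.of k)) :=
    inferInstanceAs (Subsingleton (PrimeSpectrum k))
  have hZ : Subsingleton Z := f.injective.subsingleton
  have hdisc : DiscreteTopology Z := Subsingleton.discreteTopology
  exact absurd hdim (topologicalKrullDim_zero_of_discreteTopology Z).not_gt
end

section
/- Let k be a field, let Z be an integral scheme of finite type over k whose underlying topological space has positive Krull dimension, and let m ≥ 2 be a natural number. Let P denote the m-fold fiber product of Z with itself over Spec k (the product over the index type Fin m of the constant family with value Z, in the category of schemes over Spec k), with projections pr_i : P → Z for i ∈ Fin m. Then for any two distinct indices i ≠ j in Fin m, there exists a point p of P such that pr_i(p) ≠ pr_j(p) as points of the topological space of Z. In particular, P is not set-theoretically contained in the (i,j)-th partial diagonal. -/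
open AlgebraicGeometry CategoryTheory CategoryTheory.Limits

/-!
Positive Krull dimension gives two distinct points `x`, `y` of `Z`. Both lie over the unique point of
`Spec k`, so some point of `Z ×ₖ Z` projects to `x` and `y`. Its image under the morphism to the
`m`-fold product whose `i`-th coordinate is the first projection, and whose other coordinates are the
second, is the required point.
-/

/-- Let `Z` be an integral scheme of finite type over a field `k` of positive Krull
dimension, and let `m ≥ 2`.  Let `P` be the `m`-fold fiber product of `Z` with itself
over `Spec k` (the wide pullback of the constant family with value `Z` over `Fin m`),
with projections `pr_i`.  Then for any two distinct indices `i ≠ j` in `Fin m` there is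
a point `p` of `P` with `pr_i(p) ≠ pr_j(p)`; in particular `P` is not set-theoretically
contained in the `(i,j)`-th partial diagonal. -/
theorem exists_point_off_partial_diagonal
    (k : Type) [Field k] (Z : Scheme) [IsIntegral Z]
    (f : Z ⟶ Spec (CommRingCat.of k))
    [LocallyOfFiniteType f] [QuasiCompact f]
    (hdim : 0 < topologicalKrullDim Z)
    (m : ℕ) (hm : 2 ≤ m) (i j : Fin m) (hij : i ≠ j) :
    ∃ p : (widePullback (C := Scheme)
        (Spec (CommRingCat.of k)) (fun _ : Fin m => Z) (fun _ => f) : Scheme),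
      (WidePullback.π (fun _ : Fin m => f) i).base p ≠
        (WidePullback.π (fun _ : Fin m => f) j).base p := by
  -- A space with at most one point has Krull dimension at most zero.
  have hZ : ∃ x y : Z, x ≠ y := by
    by_contra! h
    have : Subsingleton Z := ⟨h⟩
    have : Subsingleton (TopologicalSpace.IrreducibleCloseds Z) := by
      refine ⟨fun a b => TopologicalSpace.IrreducibleCloseds.ext ?_⟩
      rw [Subsingleton.eq_univ_of_nonempty a.isIrreducible.1,
        Subsingleton.eq_univ_of_nonempty b.isIrreducible.1]
    exact absurd hdim (not_lt.mpr Order.krullDim_nonpos_of_subsingleton)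
  obtain ⟨x, y, hxy⟩ := hZ
  -- `Spec k` is a single point, so `x` and `y` lie over the same point of the base.
  have : Subsingleton (Spec (CommRingCat.of k)) :=
    inferInstanceAs (Subsingleton (PrimeSpectrum k))
  obtain ⟨w, hw₁, hw₂⟩ := Scheme.Pullback.exists_preimage_pullback (f := f) (g := f) x y
    (Subsingleton.elim _ _)
  -- The morphism `Z ×ₖ Z ⟶ P` with `i`-th coordinate `fst` and all other coordinates `snd`.
  let φ : pullback f f ⟶ widePullback (Spec (CommRingCat.of k)) (fun _ : Fin m => Z)
      (fun _ => f) :=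
    WidePullback.lift (pullback.fst f f ≫ f)
      (fun l => if l = i then pullback.fst f f else pullback.snd f f)
      (fun l => by split_ifs <;> simp [pullback.condition])
  have hi : φ ≫ WidePullback.π (fun _ : Fin m => f) i = pullback.fst f f := by
    exact (WidePullback.lift_π _ _ _ _ i).trans (if_pos rfl)
  have hj : φ ≫ WidePullback.π (fun _ : Fin m => f) j = pullback.snd f f := by
    exact (WidePullback.lift_π _ _ _ _ j).trans (if_neg hij.symm)
  refine ⟨φ w, fun h => hxy ?_⟩
  rw [← hw₁, ← hw₂, ← hi, ← hj]
  simpa using h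
end

section
/- Let k be a field and let t denote the variable of the formal power series ring k[[t]]. Let m, n be natural numbers and let α₁, α₂, β₁, β₂, γ, δ ∈ k[[t]] satisfy: the order of α₁ equals m; α₂ = γ·α₁; β₂ = δ·β₁; t^{m+n+1} divides α₁ − β₁; and t^{m+n+1} divides α₂ − β₂. Then t^{n+1} divides γ − δ. -/
open PowerSeries

/-- The power-series computation underlying rational approximation under blowups:
if `ord α₁ = m`, `α₂ = γ·α₁`, `β₂ = δ·β₁`, and `t^(m+n+1)` divides both `α₁ - β₁` and
`α₂ - β₂`, then `t^(n+1)` divides `γ - δ`. -/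
theorem ratio_approximation_powerSeries
    (k : Type*) [Field k] (m n : ℕ)
    (α₁ α₂ β₁ β₂ γ δ : PowerSeries k)
    (hord : α₁.order = m)
    (hα₂ : α₂ = γ * α₁) (hβ₂ : β₂ = δ * β₁)
    (h₁ : (PowerSeries.X : PowerSeries k) ^ (m + n + 1) ∣ α₁ - β₁)
    (h₂ : (PowerSeries.X : PowerSeries k) ^ (m + n + 1) ∣ α₂ - β₂) :
    (PowerSeries.X : PowerSeries k) ^ (n + 1) ∣ γ - δ := by
  -- `(γ - δ) α₁ = (α₂ - β₂) - δ (α₁ - β₁)`, and cancelling `α₁` costs its order `m`.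
  have key : (PowerSeries.X : PowerSeries k) ^ (m + n + 1) ∣ (γ - δ) * α₁ := by
    have h : (γ - δ) * α₁ = (α₂ - β₂) - δ * (α₁ - β₁) := by
      rw [hα₂, hβ₂]; ring
    rw [h]
    exact dvd_sub h₂ (h₁.mul_left δ)
  rw [pow_dvd_iff_le_emultiplicity, ← order_eq_emultiplicity_X] at key ⊢
  rw [order_mul, hord] at key
  have hm : (m : ℕ∞) ≠ ⊤ := ENat.natCast_ne_top m
  rw [← ENat.add_le_add_iff_right hm]
  convert key using 1
  push_cast
  ring
end

section
/- Let k be a perfect field and let X be an integral scheme of finite type over k. Let x be a point of X that is not the generic point of X, and suppose the structure morphism X → Spec k is smooth on some open neighbourhood of x. Then x is movable: there exist an integral scheme C of finite type over the residue field κ(x) whose structure morphism C → Spec κ(x) is smooth and whose underlying space has Krull dimension 1, a κ(x)-rational point c₀ : Spec κ(x) → C, and a morphism of k-schemes γ : C → X such that the composite γ ∘ c₀ equals the canonical morphism Spec κ(x) → X associated to the point x, and the set-theoretic image of γ is not contained in the closure of {x} in X. -/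
/-!
The point `x` is moved along a line in an étale chart. Let `A` be the local ring of `X` at `x`,
with maximal ideal `m ≠ 0` and residue field `κ`. By Nakayama there is a function `t` near `x`,
vanishing at `x`, with `t ∉ m²`. Since `k` is perfect, `κ` is formally smooth over `k`, so
`m/m² → κ ⊗ Ω[A⁄k]` is injective and `dt` does not vanish at `x` (`tmul_D_ne_zero`). Hence `t`
extends to functions `a i` with `a i₀ = t` whose differentials form a basis of `Ω[A⁄k]`, and these
functions define an étale map from a neighbourhood `U` of `x` to the affine space over `k`
(`formallyEtale_of_basis`, `exists_etale_chart`).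

After base change to `κ`, the line through the image of `x` in the direction of the `i₀`-th axis
pulls back to a scheme étale over `Spec κ[X]`, with a `κ`-rational point over the origin given by
`x` itself. Flatness and unramifiedness make its local ring at this point a domain with maximal
ideal generated by `X`, so a neighbourhood of the point is a smooth integral curve over `κ`
(`exists_curve_of_etale`, `exists_curve_of_etale_aeval`). On it `t` restricts to the coordinate
`X ≠ 0`, so the generic point of the curve is not sent into the closure of `x`, where `t` vanishes.
-/

universe u

/-! ### Étale algebras over the affine line -/

section AffineLine

open Polynomial

/-- By Krull's intersection theorem every nonzero element is a power of `s` times a unit. -/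
theorem isDomain_of_maximalIdeal_eq_span {L : Type*} [CommRing L] [IsLocalRing L]
    [IsNoetherianRing L] (s : L) (hs : s ∈ nonZeroDivisors L)
    (hm : IsLocalRing.maximalIdeal L = Ideal.span {s}) : IsDomain L := by
  have key : ∀ a : L, a ≠ 0 → ∃ n c, IsUnit c ∧ a = s ^ n * c := by
    intro a ha
    have hinf : ∃ n, a ∉ Ideal.span {s} ^ n := by
      by_contra! h
      refine ha ?_
      have := Ideal.iInf_pow_eq_bot_of_isLocalRing (IsLocalRing.maximalIdeal L)
        (IsLocalRing.maximalIdeal.isMaximal L).ne_top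
      rw [← Ideal.mem_bot, ← this, hm]
      simpa [Ideal.mem_iInf] using h
    classical
    have hn := Nat.find_spec hinf
    have hmin := fun {m} ↦ Nat.find_min hinf (m := m)
    generalize Nat.find hinf = n at hn hmin
    cases n with
    | zero => simp at hn
    | succ n =>
      have := hmin (Nat.lt_succ_self n)
      rw [not_not, Ideal.span_singleton_pow, Ideal.mem_span_singleton] at this
      obtain ⟨c, rfl⟩ := this
      refine ⟨n, c, ?_, rfl⟩
      by_contra hc
      have : c ∈ IsLocalRing.maximalIdeal L := hc
      rw [hm, Ideal.mem_span_singleton] at this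
      obtain ⟨d, rfl⟩ := this
      refine hn ?_
      rw [Ideal.span_singleton_pow, Ideal.mem_span_singleton]
      exact ⟨d, by ring⟩
  have : NoZeroDivisors L := ⟨by
    intro a b hab
    by_contra! h
    obtain ⟨n, c, hc, rfl⟩ := key a h.1
    obtain ⟨m, d, hd, rfl⟩ := key b h.2
    have h1 : (s ^ n * s ^ m) * (c * d) = 0 := by rw [← hab]; ring
    rw [mul_comm, mul_right_mem_nonZeroDivisors_eq_zero_iff
      (mul_mem (pow_mem hs n) (pow_mem hs m))] at h1
    exact not_isUnit_zero (h1 ▸ hc.mul hd)⟩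
  exact NoZeroDivisors.to_isDomain L

/-- The kernel of `R → R_q` is finitely generated, hence killed by a single `g ∉ q`; then
`R_g` embeds into the domain `R_q`. -/
theorem exists_away_isDomain_of_atPrime {R : Type*} [CommRing R] [IsNoetherianRing R]
    (q : Ideal R) [q.IsPrime] [IsDomain (Localization.AtPrime q)] :
    ∃ g ∉ q, IsDomain (Localization.Away g) := by
  let N := RingHom.ker (algebraMap R (Localization.AtPrime q))
  obtain ⟨S, hS⟩ : N.FG := IsNoetherian.noetherian N
  have h0 : ∀ a ∈ N, ∃ g ∉ q, g * a = 0 := by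
    intro a ha
    obtain ⟨⟨g, hg⟩, h⟩ := (IsLocalization.map_eq_zero_iff q.primeCompl _ a).mp ha
    exact ⟨g, hg, h⟩
  have h1 : ∀ a : S, ∃ g ∉ q, g * a.1 = 0 := fun a ↦ h0 _ (hS ▸ Ideal.subset_span a.2)
  choose G hGq hG using h1
  have hgq : ∏ a, G a ∉ q := by
    rw [Ideal.IsPrime.prod_mem_iff]; push Not; exact fun a _ ↦ hGq a
  refine ⟨∏ a, G a, hgq, ?_⟩
  set g := ∏ a, G a
  have hgN : ∀ a ∈ N, g * a = 0 := by
    intro a ha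
    rw [← hS] at ha
    induction ha using Submodule.span_induction with
    | mem x hx =>
      obtain ⟨c, hc⟩ := Finset.dvd_prod_of_mem G (Finset.mem_univ (⟨x, hx⟩ : S))
      rw [show g = _ from hc, mul_right_comm, hG, zero_mul]
    | zero => simp
    | add x y _ _ hx hy => rw [mul_add, hx, hy, add_zero]
    | smul c x _ hx => rw [smul_eq_mul, mul_left_comm, hx, mul_zero]
  let f : Localization.Away g →+* Localization.AtPrime q :=
    IsLocalization.Away.lift g (g := algebraMap R _)
      (IsLocalization.map_units (Localization.AtPrime q) (⟨g, hgq⟩ : q.primeCompl))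
  refine Function.Injective.isDomain f ?_
  rw [injective_iff_map_eq_zero]
  intro x hx
  obtain ⟨a, ⟨_, n, rfl⟩, rfl⟩ := IsLocalization.exists_mk'_eq (Submonoid.powers g) x
  have ha : f (algebraMap R _ a) = 0 := by
    rw [← IsLocalization.mk'_spec (Localization.Away g) a
      (⟨g ^ n, n, rfl⟩ : Submonoid.powers g), map_mul, hx, zero_mul]
  rw [IsLocalization.Away.lift_eq] at ha
  rw [IsLocalization.mk'_eq_zero_iff]
  exact ⟨⟨g, 1, pow_one g⟩, hgN a ha⟩

theorem algebraMap_X_mem_nonZeroDivisors_of_flat (K L : Type*) [Field K] [CommRing L]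
    [Algebra K[X] L] [Module.Flat K[X] L] : algebraMap K[X] L X ∈ nonZeroDivisors L := by
  have h1 := Module.Flat.isSMulRegular_of_nonZeroDivisors (M := L)
    (mem_nonZeroDivisors_of_ne_zero (X_ne_zero (R := K)))
  rw [mem_nonZeroDivisors_iff_right]
  intro x hx
  exact h1 (by simpa [Algebra.smul_def, mul_comm] using hx)

/-- An étale `K[X]`-algebra is a domain near any point over the origin: its local ring there is
unramified and flat over `K[X]`, so its maximal ideal is generated by the nonzerodivisor `X`. -/
theorem exists_away_isDomain_of_etale {K R : Type*} [Field K] [CommRing R] [Algebra K[X] R]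
    [Algebra.Etale K[X] R] (q : Ideal R) [q.IsPrime] (hq : algebraMap K[X] R X ∈ q) :
    ∃ g ∉ q, IsDomain (Localization.Away g) := by
  have : IsNoetherianRing R := Algebra.FiniteType.isNoetherianRing K[X] R
  have hqX : q.under K[X] = Ideal.span {X} := by
    refine ((PrincipalIdealRing.isMaximal_of_irreducible irreducible_X).eq_of_le
      (Ideal.IsPrime.under K[X] q).ne_top ?_).symm
    rwa [Ideal.span_singleton_le_iff_mem]
  let := Localization.AtPrime.algebraOfLiesOver (q.under K[X]) q
  have hunr := ((Algebra.isUnramifiedAt_iff_map_eq K[X] (q.under K[X]) q).mp inferInstance).2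
  rw [hqX, Ideal.map_span, Set.image_singleton] at hunr
  have : Module.Flat K[X] R := inferInstance
  have : Module.Flat K[X] (Localization.AtPrime q) := .trans K[X] R _
  have : IsDomain (Localization.AtPrime q) := by
    refine isDomain_of_maximalIdeal_eq_span _ ?_ hunr.symm
    exact algebraMap_X_mem_nonZeroDivisors_of_flat _ _
  exact exists_away_isDomain_of_atPrime q

/-- The upper bound holds because étale algebras are quasi-finite, so there are no strict
inclusions between primes over the same prime of `K[X]`. -/
theorem ringKrullDim_eq_one_of_etale {K R : Type*} [Field K] [CommRing R] [IsDomain R]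
    [Algebra K[X] R] [Algebra.Etale K[X] R] (q : Ideal R) [q.IsPrime]
    (hq : q ≠ ⊥) : ringKrullDim R = 1 := by
  refine le_antisymm ?_ ?_
  · have h1 : ringKrullDim K[X] = 1 := by
      rw [Polynomial.ringKrullDim_of_isNoetherianRing, ringKrullDim_eq_zero_of_field, zero_add]
    rw [← h1]
    refine Order.krullDim_le_of_strictMono (PrimeSpectrum.comap (algebraMap K[X] R)) ?_
    intro P Q hPQ
    refine lt_of_le_of_ne (Ideal.comap_mono hPQ.le) fun h ↦ hPQ.ne ?_
    ext1
    exact Algebra.QuasiFinite.eq_of_le_of_under_eq (R := K[X]) _ _ hPQ.le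
      congr($(h).asIdeal)
  · rw [ringKrullDim, Order.one_le_krullDim_iff]
    exact ⟨⊥, ⟨q, ‹_›⟩, bot_lt_iff_ne_bot.mpr fun h ↦ hq congr($(h).asIdeal)⟩

end AffineLine

/-! ### Étale coordinates -/

section Coordinates

open IsLocalRing TensorProduct KaehlerDifferential

/-- If the differentials of the coordinates `T i` form a basis of `Ω[A⁄R]`, then
`A ⊗ Ω[R[T]⁄R] → Ω[A⁄R]` is bijective, and the Jacobi-Zariski sequence of `R → R[T] → A` shows
that both `Ω` and `H¹` of the cotangent complex of `A` over `R[T]` vanish. -/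
theorem formallyEtale_of_basis {R A ι : Type*} [CommRing R] [CommRing A] [Algebra R A]
    [Algebra (MvPolynomial ι R) A] [IsScalarTower R (MvPolynomial ι R) A]
    [Algebra.FormallySmooth R A] (b : Module.Basis ι A Ω[A⁄R])
    (hb : ∀ i, b i = D R A (algebraMap (MvPolynomial ι R) A (.X i))) :
    Algebra.FormallyEtale (MvPolynomial ι R) A := by
  have hbij : Function.Bijective (mapBaseChange R (MvPolynomial ι R) A) := by
    let e : A ⊗[MvPolynomial ι R] Ω[MvPolynomial ι R⁄R] ≃ₗ[A] Ω[A⁄R] :=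
      ((mvPolynomialBasis R ι).baseChange A).equiv b (Equiv.refl ι)
    have : mapBaseChange R (MvPolynomial ι R) A = e.toLinearMap := by
      refine ((mvPolynomialBasis R ι).baseChange A).ext fun i ↦ ?_
      rw [LinearEquiv.coe_coe]
      rw [show e _ = _ from Module.Basis.equiv_apply ..]
      simp [hb]
    rw [this]
    exact e.bijective
  refine ⟨?_, ?_⟩
  · rw [subsingleton_iff_forall_eq 0]
    intro x
    obtain ⟨x, rfl⟩ := KaehlerDifferential.map_surjective R (MvPolynomial ι R) A x
    obtain ⟨y, rfl⟩ := hbij.2 x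
    exact (exact_mapBaseChange_map R (MvPolynomial ι R) A).apply_apply_eq_zero y
  · rw [subsingleton_iff_forall_eq 0]
    intro x
    have h : Algebra.H1Cotangent.δ R (MvPolynomial ι R) A x = 0 :=
      hbij.1 (by
        rw [(Algebra.H1Cotangent.exact_δ_mapBaseChange R (MvPolynomial ι R)
          A).apply_apply_eq_zero, map_zero])
    obtain ⟨y, rfl⟩ := (Algebra.H1Cotangent.exact_map_δ R (MvPolynomial ι R) A x).mp h
    rw [Subsingleton.elim y 0, map_zero]

/-- Over a perfect field the residue field of `A` is formally smooth, which makes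
`m/m² → κ ⊗ Ω[A⁄k]` injective. -/
theorem tmul_D_ne_zero {k A : Type*} [Field k] [PerfectField k] [CommRing A] [IsLocalRing A]
    [Algebra k A] [Algebra.EssFiniteType k A] [Algebra.FormallySmooth k A] (t : A)
    (ht : t ∈ maximalIdeal A) (ht' : t ∉ maximalIdeal A ^ 2) :
    (1 : ResidueField A) ⊗ₜ[A] D k A t ≠ 0 := by
  have : Algebra.EssFiniteType k (ResidueField A) := .comp _ A _
  have : Algebra.FormallySmooth k (ResidueField A) := inferInstance
  have hinj := (Algebra.FormallySmooth.kerCotangentToTensor_injective_iff (R := k) (P := A)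
    (A := ResidueField A) IsLocalRing.residue_surjective).mpr inferInstance
  have hk : RingHom.ker (algebraMap A (ResidueField A)) = maximalIdeal A := ker_residue
  intro h
  have ht2 : t ∈ RingHom.ker (algebraMap A (ResidueField A)) := by rwa [hk]
  have h2 := kerCotangentToTensor_toCotangent k A (ResidueField A) ⟨t, ht2⟩
  rw [h, ← map_zero (kerCotangentToTensor k A (ResidueField A))] at h2
  have := hinj h2
  rw [Ideal.toCotangent_eq_zero] at this
  have h3 : t ∈ RingHom.ker (algebraMap A (ResidueField A)) ^ 2 := this
  rw [hk] at h3
  exact ht' h3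

/-- An element `t` of `m \ m²` can be completed to a system of elements of `B` whose differentials
form a basis of `Ω[A⁄k]`. -/
theorem exists_basis_D {k B A : Type u} [Field k] [PerfectField k] [CommRing B] [Algebra k B]
    [CommRing A] [IsLocalRing A] [Algebra k A] [Algebra B A] [IsScalarTower k B A]
    [Algebra.EssFiniteType k A] [Algebra.FormallySmooth k A] (p : Ideal B) [p.IsPrime]
    [IsLocalization.AtPrime A p] (t : B)
    (ht : algebraMap B A t ∈ maximalIdeal A) (ht' : algebraMap B A t ∉ maximalIdeal A ^ 2) :
    ∃ (ι : Type u) (i₀ : ι) (a : ι → B) (b : Module.Basis ι A Ω[A⁄k]),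
      a i₀ = t ∧ ∀ i, b i = D k A (algebraMap B A (a i)) := by
  let v : B → ResidueField A ⊗[A] Ω[A⁄k] := fun x ↦ 1 ⊗ₜ D k A (algebraMap B A x)
  have hv : Submodule.span (ResidueField A) (Set.range v) = ⊤ := by
    have := (map_tensorProduct_mk_eq_top (R := A)).mpr
      (span_range_map_derivation_of_isLocalization k B A p.primeCompl)
    rw [← Submodule.span_image, ← Set.range_comp, eq_top_iff, ← SetLike.coe_subset_coe,
      Submodule.top_coe] at this
    rw [eq_top_iff]
    refine Set.Subset.trans this ?_
    have hcomp : TensorProduct.mk A (ResidueField A) Ω[A⁄k] 1 ∘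
        KaehlerDifferential.map k k B A ∘ D k B = v := by
      ext x
      simp [v]
    rw [hcomp]
    exact Submodule.span_subset_span A (ResidueField A) _
  have hli : LinearIndepOn (ResidueField A) id {v t} :=
    .singleton (tmul_D_ne_zero _ ht ht')
  obtain ⟨s, hs, hts, hspan, hsli⟩ := exists_linearIndepOn_id_extension hli
    (t := Set.range v) (by rintro _ rfl; exact ⟨t, rfl⟩)
  have hmem : v t ∈ s := hts rfl
  have hch : ∀ i : s, ∃ x, v x = i ∧ (i = ⟨v t, hmem⟩ → x = t) := fun i ↦ by
    by_cases h : i = ⟨v t, hmem⟩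
    · exact ⟨t, by simp [h], fun _ ↦ rfl⟩
    · obtain ⟨x, hx⟩ := hs i.2
      exact ⟨x, hx, fun h' ↦ (h h').elim⟩
  choose a ha hat using hch
  have heq : (TensorProduct.mk A (ResidueField A) Ω[A⁄k] 1 ∘ fun i ↦ D k A (algebraMap B A (a i)))
      = ((↑) : s → _) := funext ha
  obtain ⟨b, hb⟩ := Module.exists_basis_of_basis_baseChange (R := A)
    (fun i ↦ D k A (algebraMap B A (a i)))
    (by rw [heq]; exact hsli)
    (by rw [heq, Subtype.range_coe, eq_top_iff, ← hv]; exact Submodule.span_le.mpr hspan)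
    (Module.Flat.rTensor_preserves_injective_linearMap _ Subtype.val_injective)
  exact ⟨s, ⟨v t, hmem⟩, a, b, hat _ rfl, hb⟩

end Coordinates

/-! ### Curves through a point of a smooth affine scheme -/

section Curve

open IsLocalRing TensorProduct Polynomial

/-- A neighbourhood of a rational point over the origin in an étale `K[X]`-algebra is a smooth
integral curve over `K`. -/
theorem exists_curve_of_etale {K R₀ : Type u} [Field K] [CommRing R₀] [Algebra K[X] R₀]
    [Algebra.Etale K[X] R₀] (ε : R₀ →+* K)
    (hε : ε.comp (algebraMap K[X] R₀) = Polynomial.evalRingHom 0) :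
    ∃ (R : Type u) (_ : CommRing R) (ψ : R₀ →+* R) (σ : R →+* K),
      IsDomain R ∧ ((ψ.comp (algebraMap K[X] R₀)).comp C).Smooth ∧ ringKrullDim R = 1 ∧
      σ.comp ψ = ε ∧ ψ (algebraMap K[X] R₀ X) ≠ 0 := by
  have hX : ε (algebraMap K[X] R₀ X) = 0 := by
    simpa using congr($hε X)
  have : (RingHom.ker ε).IsPrime := RingHom.ker_isPrime ε
  obtain ⟨g, hg, hdom⟩ := exists_away_isDomain_of_etale (RingHom.ker ε) hX
  have : Algebra.Etale R₀ (Localization.Away g) := Algebra.Etale.of_isLocalizationAway g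
  have : Algebra.Etale K[X] (Localization.Away g) := .comp _ R₀ _
  have hgu : IsUnit (ε g) := isUnit_iff_ne_zero.mpr hg
  let σ : Localization.Away g →+* K := IsLocalization.Away.lift g hgu
  have hσ : σ.comp (algebraMap R₀ _) = ε := IsLocalization.Away.lift_comp g hgu
  have hne : algebraMap R₀ (Localization.Away g) (algebraMap K[X] R₀ X) ≠ 0 := by
    rw [← IsScalarTower.algebraMap_apply]
    exact nonZeroDivisors.ne_zero (algebraMap_X_mem_nonZeroDivisors_of_flat _ _)
  refine ⟨_, _, algebraMap R₀ (Localization.Away g), σ, hdom, ?_, ?_, hσ, hne⟩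
  · rw [← IsScalarTower.algebraMap_eq]
    refine RingHom.Smooth.comp (f := C) ?_ ?_
    · rw [← Polynomial.algebraMap_eq, RingHom.smooth_algebraMap]
      exact ⟨inferInstance, inferInstance⟩
    · rw [RingHom.smooth_algebraMap]
      infer_instance
  · have : (RingHom.ker σ).IsPrime := RingHom.ker_isPrime σ
    refine ringKrullDim_eq_one_of_etale (K := K) (RingHom.ker σ) fun h ↦ hne ?_
    rw [← Ideal.mem_bot, ← h, RingHom.mem_ker, ← RingHom.comp_apply, hσ, hX]

/-- The universal property of `S ⊗[P] B` for ring homomorphisms into a ring that carries no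
chosen `P`-algebra structure. -/
theorem exists_tensorProduct_ringHom {P S B T : Type*} [CommRing P] [CommRing S] [CommRing B]
    [CommRing T] [Algebra P S] [Algebra P B] (f : S →+* T) (g : B →+* T)
    (h : f.comp (algebraMap P S) = g.comp (algebraMap P B)) :
    ∃ ε : S ⊗[P] B →+* T, ε.comp (algebraMap S _) = f ∧
      ε.comp (Algebra.TensorProduct.includeRight : B →ₐ[P] S ⊗[P] B).toRingHom = g := by
  let := (f.comp (algebraMap P S)).toAlgebra
  let fP : S →ₐ[P] T := { f with commutes' := fun _ ↦ rfl }
  let gP : B →ₐ[P] T := { g with commutes' := fun c ↦ congr($h.symm c) }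
  refine ⟨(Algebra.TensorProduct.lift fP gP fun _ _ ↦ .all _ _).toRingHom, ?_, ?_⟩
  · ext c; simp [fP]
  · ext c; simp [gP]

/-- If `Spec B` is étale over affine space through `a`, the pullback of `Spec B` along the line
`k[T] → K[X]`, `T i₀ ↦ X`, `T i ↦ e (a i)` for `i ≠ i₀`, is étale over `K[X]` and has a rational
point `σ` induced by `e`. A neighbourhood of this point is the required curve, on which `a i₀`
restricts to the coordinate `X`. -/
theorem exists_curve_of_etale_aeval {k K B ι : Type u} [Field k] [Field K] [CommRing B]
    [Algebra k K] [Algebra k B] (a : ι → B) (i₀ : ι)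
    (ha : (MvPolynomial.aeval (R := k) a).toRingHom.Etale) (e : B →ₐ[k] K) (he : e (a i₀) = 0) :
    ∃ (R : Type u) (_ : CommRing R) (φ : B →+* R) (ρ : K →+* R) (σ : R →+* K),
      IsDomain R ∧ ρ.Smooth ∧ ringKrullDim R = 1 ∧ σ.comp ρ = .id K ∧ σ.comp φ = e ∧
      φ.comp (algebraMap k B) = ρ.comp (algebraMap k K) ∧ φ (a i₀) ≠ 0 := by
  classical
  -- The line through the image of `e` in affine space, parallel to the `i₀`-th axis.
  let τ : MvPolynomial ι k →ₐ[k] K[X] :=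
    MvPolynomial.aeval fun i ↦ if i = i₀ then X else C (e (a i))
  let := τ.toRingHom.toAlgebra
  let := (MvPolynomial.aeval (R := k) a).toRingHom.toAlgebra
  have : Algebra.Etale (MvPolynomial ι k) B := ha
  have hτ : (Polynomial.evalRingHom 0).comp τ.toRingHom =
      (e : B →+* K).comp (MvPolynomial.aeval (R := k) a).toRingHom := by
    refine MvPolynomial.ringHom_ext (fun c ↦ ?_) fun i ↦ ?_
    · simp [τ, Polynomial.algebraMap_apply]
    · by_cases h : i = i₀
      · subst h; simp [τ, he]
      · simp [τ, h]
  obtain ⟨ε, hε, hε'⟩ := exists_tensorProduct_ringHom (P := MvPolynomial ι k) _ _ hτ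
  obtain ⟨R, _, ψ, σ, hdom, hsm, hdim, hσ, hX⟩ := exists_curve_of_etale ε hε
  let inr : B →+* K[X] ⊗[MvPolynomial ι k] B :=
    (Algebra.TensorProduct.includeRight : B →ₐ[MvPolynomial ι k] _).toRingHom
  have hcomm : inr.comp (MvPolynomial.aeval (R := k) a).toRingHom =
      (algebraMap K[X] _).comp τ.toRingHom :=
    (Algebra.TensorProduct.includeLeftRingHom_comp_algebraMap (R := MvPolynomial ι k)
      (A := K[X]) (B := B)).symm
  refine ⟨R, _, ψ.comp inr, (ψ.comp (algebraMap K[X] _)).comp C, σ, hdom, hsm, hdim,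
    ?_, ?_, ?_, ?_⟩
  · rw [← RingHom.comp_assoc, ← RingHom.comp_assoc, hσ, hε]
    ext c
    simp
  · rw [← RingHom.comp_assoc, hσ, hε']
  · ext c
    have := congr(ψ ($hcomm (MvPolynomial.C c)))
    simpa [τ, Polynomial.algebraMap_apply] using this
  · have := congr(ψ ($hcomm (MvPolynomial.X i₀)))
    have h2 : ψ (inr (a i₀)) = ψ (algebraMap K[X] _ X) := by simpa [τ] using this
    rw [RingHom.comp_apply, h2]
    exact hX

/-- By Nakayama's lemma `m ≠ m²`, and `m` is generated by the image of `p`. -/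
theorem exists_mem_notMem_maximalIdeal_sq {B A : Type*} [CommRing B] [CommRing A] [IsLocalRing A]
    [IsNoetherianRing A] [Algebra B A] (p : Ideal B) [p.IsPrime] [IsLocalization.AtPrime A p]
    (hA : maximalIdeal A ≠ ⊥) : ∃ t ∈ p, algebraMap B A t ∉ maximalIdeal A ^ 2 := by
  by_contra! h
  refine hA (Submodule.eq_bot_of_le_smul_of_le_jacobson_bot (maximalIdeal A) _
    (IsNoetherian.noetherian _) ?_ (maximalIdeal_le_jacobson _))
  rw [smul_eq_mul, ← sq, ← IsLocalization.AtPrime.map_eq_maximalIdeal p A,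
    Ideal.map_le_iff_le_comap, IsLocalization.AtPrime.map_eq_maximalIdeal p A]
  exact h

/-- An element `t ∈ p` outside `m²` is one coordinate of an étale map from a neighbourhood of `p`
to affine space over `k`. -/
theorem exists_etale_chart {k B A : Type u} [Field k] [PerfectField k] [CommRing B]
    [Algebra k B] [Algebra.Smooth k B] [CommRing A] [IsLocalRing A] [Algebra k A] [Algebra B A]
    [IsScalarTower k B A] (p : Ideal B) [p.IsPrime] [IsLocalization.AtPrime A p] (t : B)
    (ht : t ∈ p) (ht' : algebraMap B A t ∉ maximalIdeal A ^ 2) :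
    ∃ (ι : Type u) (i₀ : ι) (a : ι → B) (f : B), f ∉ p ∧ a i₀ = t ∧
      (MvPolynomial.aeval (R := k)
        fun i ↦ algebraMap B (Localization.Away f) (a i)).toRingHom.Etale := by
  have : Algebra.EssFiniteType B A := .of_isLocalization A p.primeCompl
  have : Algebra.EssFiniteType k A := .comp k B A
  have : Algebra.FormallySmooth B A := .of_isLocalization p.primeCompl
  have : Algebra.FormallySmooth k A := .comp k B A
  obtain ⟨ι, i₀, a, b, ha, hb⟩ := exists_basis_D (k := k) p t
    ((IsLocalization.AtPrime.to_map_mem_maximal_iff A p t).mpr ht) ht'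
  have : Finite ι := Module.Finite.finite_basis b
  let := (MvPolynomial.aeval (R := k) a).toRingHom.toAlgebra
  have : IsScalarTower k (MvPolynomial ι k) B := .of_algebraMap_eq'
    (MvPolynomial.aeval (R := k) a).comp_algebraMap.symm
  have : Algebra.FinitePresentation (MvPolynomial ι k) B :=
    .of_restrict_scalars_finitePresentation k _ _
  let := ((algebraMap B A).comp (algebraMap (MvPolynomial ι k) B)).toAlgebra
  have : IsScalarTower (MvPolynomial ι k) B A := .of_algebraMap_eq' rfl
  have : IsScalarTower k (MvPolynomial ι k) A := .to₁₂₄ _ _ B _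
  have : Algebra.FormallyEtale (MvPolynomial ι k) A := formallyEtale_of_basis b fun i ↦ by
    rw [hb, IsScalarTower.algebraMap_apply _ B A]
    simp [RingHom.algebraMap_toAlgebra]
  have : Algebra.IsEtaleAt (MvPolynomial ι k) p :=
    .of_equiv ((IsLocalization.algEquiv p.primeCompl A (Localization.AtPrime p)).restrictScalars _)
  obtain ⟨f, hf, het⟩ := Algebra.exists_etale_of_isEtaleAt (R := MvPolynomial ι k) p
  refine ⟨ι, i₀, a, f, hf, ha, ?_⟩
  rw [← RingHom.etale_algebraMap] at het
  convert het
  refine MvPolynomial.ringHom_ext (fun c ↦ ?_) fun i ↦ ?_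
  · simp [IsScalarTower.algebraMap_apply (MvPolynomial ι k) B, RingHom.algebraMap_toAlgebra,
      IsScalarTower.algebraMap_apply k B (Localization.Away f)]
  · simp [IsScalarTower.algebraMap_apply (MvPolynomial ι k) B, RingHom.algebraMap_toAlgebra]

/-- The affine form of movability: `ρ` makes `R` a smooth integral curve over the residue field of
`A = B_p`, `σ` is a rational point of it, and `φ` is a morphism to `Spec B` sending `σ` to `p` and
the generic point of the curve outside the closed set defined by `p`. -/
theorem exists_curve_of_smooth {k B A : Type u} [Field k] [PerfectField k] [CommRing B]
    [Algebra k B] [Algebra.Smooth k B] [CommRing A] [IsLocalRing A] [Algebra B A]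
    (p : Ideal B) [p.IsPrime] [IsLocalization.AtPrime A p] (hA : maximalIdeal A ≠ ⊥) :
    ∃ (R : Type u) (_ : CommRing R) (φ : B →+* R) (ρ : ResidueField A →+* R)
      (σ : R →+* ResidueField A),
      IsDomain R ∧ ρ.Smooth ∧ ringKrullDim R = 1 ∧ σ.comp ρ = .id _ ∧
      σ.comp φ = (residue A).comp (algebraMap B A) ∧
      φ.comp (algebraMap k B) =
        ρ.comp ((residue A).comp ((algebraMap B A).comp (algebraMap k B))) ∧
      ∃ t ∈ p, φ t ≠ 0 := by
  let := ((algebraMap B A).comp (algebraMap k B)).toAlgebra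
  have : IsScalarTower k B A := .of_algebraMap_eq' rfl
  have : IsNoetherianRing B := Algebra.FiniteType.isNoetherianRing k B
  have : IsNoetherianRing A := IsLocalization.isNoetherianRing p.primeCompl A this
  obtain ⟨t, ht, ht'⟩ := exists_mem_notMem_maximalIdeal_sq (A := A) p hA
  obtain ⟨ι, i₀, a, f, hf, rfl, het⟩ := exists_etale_chart (k := k) (A := A) p t ht ht'
  have hfu : IsUnit (algebraMap B (ResidueField A) f) := by
    rw [IsScalarTower.algebraMap_apply B A]
    exact (IsLocalization.map_units A (⟨f, hf⟩ : p.primeCompl)).map _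
  let e : Localization.Away f →ₐ[k] ResidueField A :=
    { IsLocalization.Away.lift f hfu with
      commutes' := fun c ↦ by
        simp [IsScalarTower.algebraMap_apply k B (Localization.Away f),
          IsScalarTower.algebraMap_apply k B (ResidueField A)] }
  have he : (e : Localization.Away f →+* ResidueField A).comp (algebraMap B _) =
      (residue A).comp (algebraMap B A) :=
    (IsLocalization.Away.lift_comp f hfu).trans (IsScalarTower.algebraMap_eq B A _)
  obtain ⟨R, _, φ, ρ, σ, h1, h2, h3, h4, h5, h6, h7⟩ := exists_curve_of_etale_aeval _ i₀ het e (by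
    refine congr($he (a i₀)).trans ?_
    exact (residue_eq_zero_iff _).mpr
      ((IsLocalization.AtPrime.to_map_mem_maximal_iff A p _).mpr ht))
  refine ⟨R, _, φ.comp (algebraMap B _), ρ, σ, h1, h2, h3, h4, ?_, ?_, _, ht, h7⟩
  · rw [← RingHom.comp_assoc, h5, he]
  · rw [RingHom.comp_assoc, ← IsScalarTower.algebraMap_eq, h6]
    rfl

end Curve

/-! ### Movability of smooth points -/

open AlgebraicGeometry CategoryTheory

/-- The local ring of an integral scheme at a non-generic point is not a field. -/
theorem maximalIdeal_stalk_ne_bot {X : Scheme} [IsIntegral X] {x : X} (hx : x ≠ genericPoint X) :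
    IsLocalRing.maximalIdeal (X.presheaf.stalk x) ≠ ⊥ := by
  intro h
  obtain ⟨V, hV, hxV, -⟩ := exists_isAffineOpen_mem_and_subset (U := ⊤) (x := x) trivial
  have : Nonempty V := ⟨x, hxV⟩
  refine hx ?_
  have hη : genericPoint X ∈ V :=
    ((genericPoint_spec X).mem_open_set_iff V.isOpen).mpr (by simpa using ⟨x, hxV⟩)
  have hp : hV.primeIdealOf ⟨x, hxV⟩ = hV.primeIdealOf ⟨genericPoint X, hη⟩ := by
    rw [hV.primeIdealOf_genericPoint, genericPoint_eq_bot_of_affine,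
      hV.primeIdealOf_eq_map_closedPoint]
    ext1
    change Ideal.comap (X.presheaf.germ V x hxV).hom (IsLocalRing.maximalIdeal _) = ⊥
    rw [h, ← RingHom.ker_eq_comap_bot]
    exact (RingHom.injective_iff_ker_eq_bot _).mp (germ_injective_of_isIntegral X x hxV)
  have := congr(hV.fromSpec $hp)
  rwa [hV.fromSpec_primeIdealOf, hV.fromSpec_primeIdealOf] at this

/-- Over a perfect field `k`, every non-generic point `x` of an integral finite type
`k`-scheme `X` at which the structure morphism is smooth is movable: there is a smooth
irreducible curve `C` over `κ(x)`, a `κ(x)`-rational point `c₀` of `C`, and a morphism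
of `k`-schemes `γ : C ⟶ X` with `γ ∘ c₀` the canonical morphism `Spec κ(x) ⟶ X`, whose
set-theoretic image is not contained in the closure of `{x}`. -/
theorem movable_of_smooth_non_generic
    (k : Type) [Field k] [PerfectField k] (X : Scheme) [IsIntegral X]
    (f : X ⟶ Spec (CommRingCat.of k))
    [LocallyOfFiniteType f] [QuasiCompact f]
    (x : X) (hx : x ≠ genericPoint X)
    (hsm : ∃ W : X.Opens, x ∈ W ∧ IsSmooth (W.ι ≫ f)) :
    ∃ (C : Scheme) (g : C ⟶ Spec (X.residueField x)) (c₀ : Spec (X.residueField x) ⟶ C)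
      (γ : C ⟶ X),
      IsIntegral C ∧ LocallyOfFiniteType g ∧ QuasiCompact g ∧ IsSmooth g ∧
      topologicalKrullDim C = 1 ∧
      c₀ ≫ g = 𝟙 (Spec (X.residueField x)) ∧
      c₀ ≫ γ = X.fromSpecResidueField x ∧
      γ ≫ f = g ≫ X.fromSpecResidueField x ≫ f ∧
      ¬ Set.range γ.base ⊆ closure {x} := by
  obtain ⟨W, hxW, hW⟩ := hsm
  obtain ⟨V, hV, hxV, hVW⟩ := exists_isAffineOpen_mem_and_subset hxW
  have hVW' : V ≤ W := hVW
  have hW' : Smooth (W.ι ≫ f) := hW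
  obtain ⟨h, hh⟩ := Spec.map_surjective (hV.fromSpec ≫ f)
  have hsmV : Smooth (Spec.map h) := by
    have : hV.fromSpec ≫ f = hV.isoSpec.inv ≫ X.homOfLE hVW' ≫ W.ι ≫ f := by
      rw [Scheme.homOfLE_ι_assoc, hV.isoSpec_inv_ι_assoc]
    rw [hh, this]
    infer_instance
  rw [HasRingHomProperty.Spec_iff (P := @Smooth)] at hsmV
  let : Algebra k Γ(X, V) := h.hom.toAlgebra
  have : Algebra.Smooth k Γ(X, V) := hsmV
  let : Algebra Γ(X, V) (X.presheaf.stalk x) := (X.presheaf.germ V x hxV).hom.toAlgebra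
  have := hV.isLocalization_stalk ⟨x, hxV⟩
  obtain ⟨R, _, φ, ρ, σ, hdom, hρ, hdim, hσρ, hσφ, hφ, t, ht, ht'⟩ :=
    exists_curve_of_smooth (k := k) (A := X.presheaf.stalk x)
      (hV.primeIdealOf ⟨x, hxV⟩).asIdeal (maximalIdeal_stalk_ne_bot hx)
  let ρ' : X.residueField x ⟶ .of R := CommRingCat.ofHom ρ
  let σ' : .of R ⟶ X.residueField x := CommRingCat.ofHom σ
  let φ' : Γ(X, V) ⟶ .of R := CommRingCat.ofHom φ
  have hx' : X.fromSpecResidueField x =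
      Spec.map (X.presheaf.germ V x hxV ≫ X.residue x) ≫ hV.fromSpec := by
    rw [Spec.map_comp, Category.assoc, Scheme.fromSpecResidueField,
      ← hV.fromSpecStalk_eq_fromSpecStalk hxV, IsAffineOpen.fromSpecStalk]
  have hsmρ : Smooth (Spec.map ρ') := by
    rw [HasRingHomProperty.Spec_iff (P := @Smooth)]
    exact hρ
  refine ⟨Spec (.of R), Spec.map ρ', Spec.map σ', Spec.map φ' ≫ hV.fromSpec, inferInstance,
    inferInstance, inferInstance, hsmρ, ?_, ?_, ?_, ?_, ?_⟩
  · exact (PrimeSpectrum.topologicalKrullDim_eq_ringKrullDim R).trans hdim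
  · rw [← Spec.map_comp, ← Spec.map_id]
    exact congr(Spec.map (CommRingCat.ofHom $hσρ))
  · rw [hx', ← Spec.map_comp_assoc]
    exact congr(Spec.map (CommRingCat.ofHom $hσφ) ≫ hV.fromSpec)
  · rw [hx', Category.assoc, Category.assoc, ← hh, ← Spec.map_comp, ← Spec.map_comp,
      ← Spec.map_comp]
    exact congr(Spec.map (CommRingCat.ofHom $hφ))
  · intro hsub
    -- The generic point of the curve: `t` does not vanish at its image, but vanishes at `x`.
    let η : Spec (.of R) := (⊥ : PrimeSpectrum R)
    have hmem : (Spec.map φ' ≫ hV.fromSpec) η ∈ closure {x} := hsub ⟨η, rfl⟩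
    have hη : (Spec.map φ' ≫ hV.fromSpec) η ∈ X.basicOpen t := by
      rw [Scheme.Hom.comp_apply]
      change Spec.map φ' η ∈ hV.fromSpec ⁻¹ᵁ X.basicOpen t
      rw [hV.fromSpec_preimage_basicOpen]
      exact ht'
    have hxt := (specializes_iff_mem_closure.mpr hmem).mem_open (X.basicOpen t).isOpen hη
    have hxt : hV.primeIdealOf ⟨x, hxV⟩ ∈ hV.fromSpec ⁻¹ᵁ X.basicOpen t := by
      change hV.fromSpec (hV.primeIdealOf ⟨x, hxV⟩) ∈ X.basicOpen t
      rw [hV.fromSpec_primeIdealOf]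
      exact hxt
    rw [hV.fromSpec_preimage_basicOpen] at hxt
    exact hxt ht
end
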